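/- Assume 0 < η_i < 1/‖A_i‖² for i = 1, …, p and let x† denote the x₀-minimal norm solution of A x = y. Then the exact-data heavy-ball iterates satisfy lim_{n→∞} E[‖x_n − x†‖²] = 0. -/

import Mathlib

/-- Expectation with respect to the first `m` i.i.d. uniformly distributed indices:
for a quantity `f` determined by the coordinates `i_0, …, i_{m-1}` of the sample path,
`avg p hp m f = p^{-m} ∑_{(i_0,…,i_{m-1}) ∈ {1,…,p}^m} f`. -/
noncomputable def avg (p : ℕ) (hp : 0 < p) (m : ℕ) (f : (ℕ → Fin p) → ℝ) : ℝ :=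
  (∑ σ : Fin m → Fin p, f (fun k => if h : k < m then σ ⟨k, h⟩ else ⟨0, hp⟩)) / (p : ℝ) ^ m

open Filter Topology Finset

section Average

variable {p : ℕ} {hp : 0 < p}

lemma avg_add (m : ℕ) (f g : (ℕ → Fin p) → ℝ) :
    avg p hp m (fun ω => f ω + g ω) = avg p hp m f + avg p hp m g := by
  simp only [avg, sum_add_distrib, add_div]

lemma avg_const_mul (m : ℕ) (c : ℝ) (f : (ℕ → Fin p) → ℝ) :
    avg p hp m (fun ω => c * f ω) = c * avg p hp m f := by
  simp only [avg, ← mul_sum, mul_div_assoc]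

lemma avg_sub (m : ℕ) (f g : (ℕ → Fin p) → ℝ) :
    avg p hp m (fun ω => f ω - g ω) = avg p hp m f - avg p hp m g := by
  simp only [avg, sum_sub_distrib, sub_div]

lemma avg_sum {ι : Type*} (s : Finset ι) (m : ℕ) (f : ι → (ℕ → Fin p) → ℝ) :
    avg p hp m (fun ω => ∑ i ∈ s, f i ω) = ∑ i ∈ s, avg p hp m (f i) := by
  simp only [avg]
  rw [sum_comm, sum_div]

lemma avg_const (m : ℕ) (c : ℝ) : avg p hp m (fun _ => c) = c := by
  have : (p : ℝ) ≠ 0 := by exact_mod_cast hp.ne'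
  simp [avg, Fintype.card_pi]
  field_simp

lemma avg_mono (m : ℕ) {f g : (ℕ → Fin p) → ℝ} (h : ∀ ω, f ω ≤ g ω) :
    avg p hp m f ≤ avg p hp m g := by
  unfold avg
  gcongr
  exact h _

lemma avg_nonneg (m : ℕ) {f : (ℕ → Fin p) → ℝ} (h : ∀ ω, 0 ≤ f ω) :
    0 ≤ avg p hp m f := by
  unfold avg
  exact div_nonneg (sum_nonneg fun _ _ => h _) (by positivity)

/-- Averaging over one more index amounts to resampling that index first. -/
lemma avg_succ (m : ℕ) (f : (ℕ → Fin p) → ℝ) :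
    avg p hp (m + 1) f
      = avg p hp m (fun ω => (p : ℝ)⁻¹ * ∑ i, f (Function.update ω m i)) := by
  have hext : ∀ (i : Fin p) (σ : Fin m → Fin p),
      (fun k => if h : k < m + 1 then (Fin.snoc σ i : Fin (m + 1) → Fin p) ⟨k, h⟩ else ⟨0, hp⟩)
        = Function.update (fun k => if h : k < m then σ ⟨k, h⟩ else ⟨0, hp⟩) m i := by
    intro i σ
    funext k
    rcases lt_trichotomy k m with h | h | h
    · simp [Function.update_of_ne h.ne, h, h.trans (Nat.lt_succ_self m), Fin.snoc]
    · subst h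
      simp [Fin.snoc]
    · simp [Function.update_of_ne h.ne', not_lt.2 h.le, not_lt.2 (Nat.succ_le_of_lt h)]
  unfold avg
  rw [← (Fin.snocEquiv fun _ : Fin (m + 1) => Fin p).sum_comp, Fintype.sum_prod_type, sum_comm,
    ← mul_sum, pow_succ]
  simp only [Fin.snocEquiv, Equiv.coe_fn_mk, hext]
  field_simp

lemma avg_succ_of_dependsOn (m : ℕ) {f : (ℕ → Fin p) → ℝ} (hf : DependsOn f (Set.Iio m)) :
    avg p hp (m + 1) f = avg p hp m f := by
  have : (p : ℝ) ≠ 0 := by exact_mod_cast hp.ne'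
  rw [avg_succ]
  congr 1
  funext ω
  have h : ∀ i, f (Function.update ω m i) = f ω := fun i =>
    hf fun k hk => Function.update_of_ne (ne_of_lt hk) _ _
  simp [h, this]

lemma avg_of_dependsOn {m n : ℕ} (hmn : m ≤ n) {f : (ℕ → Fin p) → ℝ}
    (hf : DependsOn f (Set.Iio m)) : avg p hp n f = avg p hp m f := by
  induction n, hmn using Nat.le_induction with
  | base => rfl
  | succ n hmn ih =>
    rw [← ih]
    exact avg_succ_of_dependsOn n fun a b h => hf fun k hk => h k (lt_of_lt_of_le hk hmn)

end Average

section Hilbert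

variable {X Y : Type*} [NormedAddCommGroup X] [InnerProductSpace ℝ X] [CompleteSpace X]
  [NormedAddCommGroup Y] [InnerProductSpace ℝ Y] [CompleteSpace Y]

lemma norm_sub_smul_adjoint_sq_le (T : X →L[ℝ] Y) {η : ℝ} (hη : 0 ≤ η) {n : ℝ} (hn : 0 ≤ n)
    (e e' : X) :
    ‖e + n • (e - e') - η • T.adjoint (T e)‖ ^ 2 ≤ ‖e + n • (e - e')‖ ^ 2
      - η * ((n + 1) * ‖T e‖ ^ 2 - n * ‖T e'‖ ^ 2)
      - η * (1 - η * ‖T‖ ^ 2) * ‖T e‖ ^ 2 := by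
  have h1 : ‖T.adjoint (T e)‖ ^ 2 ≤ ‖T‖ ^ 2 * ‖T e‖ ^ 2 := by
    rw [← mul_pow]
    gcongr
    simpa using T.adjoint.le_opNorm (T e)
  have h2 : inner ℝ (T e') (T e) ≤ (‖T e'‖ ^ 2 + ‖T e‖ ^ 2) / 2 := by
    nlinarith [real_inner_le_norm (T e') (T e), sq_nonneg (‖T e'‖ - ‖T e‖)]
  rw [norm_sub_sq_real, norm_smul, mul_pow, inner_smul_right, ContinuousLinearMap.adjoint_inner_right,
    map_add, map_smul, map_sub, inner_add_left, inner_smul_left, inner_sub_left,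
    real_inner_self_eq_norm_sq, Real.norm_eq_abs, sq_abs]
  simp only [conj_trivial]
  have h3 := mul_le_mul_of_nonneg_left h1 (sq_nonneg η)
  have h4 := mul_le_mul_of_nonneg_left h2 (mul_nonneg hη hn)
  nlinarith

lemma inner_eq_zero_of_forall_norm_le_add_smul {E : Type*} [NormedAddCommGroup E]
    [InnerProductSpace ℝ E] {d w : E} (h : ∀ t : ℝ, ‖d‖ ≤ ‖d + t • w‖) : inner ℝ d w = 0 := by
  set b := inner ℝ d w
  have key : ∀ t : ℝ, 0 ≤ 2 * t * b + t ^ 2 * ‖w‖ ^ 2 := by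
    intro t
    have := pow_le_pow_left₀ (norm_nonneg _) (h t) 2
    rw [norm_add_sq_real, inner_smul_right, norm_smul, mul_pow, Real.norm_eq_abs, sq_abs] at this
    linarith
  have hc : 0 < ‖w‖ ^ 2 + 1 := by positivity
  have h1 := key (-b / (‖w‖ ^ 2 + 1))
  have h2 : 2 * (-b / (‖w‖ ^ 2 + 1)) * b + (-b / (‖w‖ ^ 2 + 1)) ^ 2 * ‖w‖ ^ 2
      = -(b ^ 2 * ((‖w‖ ^ 2 + 2) / (‖w‖ ^ 2 + 1) ^ 2)) := by
    field_simp
    ring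
  rw [h2] at h1
  have h3 : 0 < (‖w‖ ^ 2 + 2) / (‖w‖ ^ 2 + 1) ^ 2 := by positivity
  have h4 : b ^ 2 ≤ 0 := by
    by_contra! hb
    nlinarith [mul_pos hb h3]
  exact pow_eq_zero_iff two_ne_zero |>.1 (le_antisymm h4 (sq_nonneg b))

/-- A vector orthogonal to the common kernel of finitely many operators is approximated by
elements of the sum of the ranges of their adjoints. -/
lemma exists_norm_sub_sum_adjoint_lt {ι : Type*} [Fintype ι] {Z : ι → Type*}
    [∀ i, NormedAddCommGroup (Z i)] [∀ i, InnerProductSpace ℝ (Z i)] [∀ i, CompleteSpace (Z i)]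
    (A : ∀ i, X →L[ℝ] Z i) {d : X} (hd : ∀ w, (∀ i, A i w = 0) → inner ℝ d w = 0)
    {ε : ℝ} (hε : 0 < ε) : ∃ v : ∀ i, Z i, ‖d - ∑ i, (A i).adjoint (v i)‖ < ε := by
  classical
  let L : (∀ i, Z i) →ₗ[ℝ] X :=
    ∑ i, ((A i).adjoint : Z i →ₗ[ℝ] X) ∘ₗ LinearMap.proj i
  have hL : ∀ v, L v = ∑ i, (A i).adjoint (v i) := by
    intro v
    simp [L]
  have hmem : d ∈ (LinearMap.range L)ᗮᗮ := by
    rw [Submodule.mem_orthogonal']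
    intro w hw
    refine hd w fun i => ?_
    rw [Submodule.mem_orthogonal'] at hw
    have h := hw (L (Pi.single i (A i w))) ⟨_, rfl⟩
    rw [hL, sum_eq_single i (fun j _ hj => by simp [Pi.single_eq_of_ne hj]) (by simp),
      Pi.single_eq_same, ContinuousLinearMap.adjoint_inner_right] at h
    exact inner_self_eq_zero.1 h
  rw [Submodule.orthogonal_orthogonal_eq_closure] at hmem
  obtain ⟨_, ⟨v, rfl⟩, hv⟩ := Metric.mem_closure_iff.1 hmem ε hε
  exact ⟨v, by rwa [← hL, ← dist_eq_norm]⟩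

end Hilbert

lemma sum_range_sq_le_of_le {s : ℕ → ℝ} {m n : ℕ} (hmn : m ≤ n) :
    (∑ j ∈ range n, s j) ^ 2
      ≤ 2 * m * ∑ j ∈ range m, s j ^ 2 + 2 * n * ∑ j ∈ Ico m n, s j ^ 2 := by
  rw [← sum_range_add_sum_Ico s hmn]
  have h1 : (∑ j ∈ range m, s j) ^ 2 ≤ m * ∑ j ∈ range m, s j ^ 2 := by
    simpa using sq_sum_le_card_mul_sum_sq (s := range m) (f := s)
  have h2 : (∑ j ∈ Ico m n, s j) ^ 2 ≤ n * ∑ j ∈ Ico m n, s j ^ 2 := by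
    refine (sq_sum_le_card_mul_sum_sq (s := Ico m n) (f := s)).trans ?_
    gcongr
    simp
  nlinarith [sq_nonneg ((∑ j ∈ range m, s j) - ∑ j ∈ Ico m n, s j)]

lemma tendsto_div_of_le_sum_Ico {T Q : ℕ → ℝ} (hT : ∀ n, 0 ≤ T n) (hQ0 : ∀ n, 0 ≤ Q n)
    (hQ : Summable Q)
    (h : ∀ m n, m ≤ n →
      T n ≤ 2 * m * ∑ j ∈ range m, Q j + 2 * n * ∑ j ∈ Ico m n, Q j) :
    Tendsto (fun n : ℕ => T n / ((n : ℝ) + 1)) atTop (𝓝 0) := by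
  rw [Metric.tendsto_atTop]
  intro ε hε
  have htail := hQ.hasSum.tendsto_sum_nat
  obtain ⟨m, hm⟩ := ((tendsto_order.1 htail).1 (∑' j, Q j - ε / 4) (by linarith)).exists
  obtain ⟨N, hN⟩ := exists_nat_gt (2 * m * (∑ j ∈ range m, Q j) / (ε / 2))
  refine ⟨max m N, fun n hn => ?_⟩
  have hmn : m ≤ n := (le_max_left _ _).trans hn
  have hNn : (N : ℝ) ≤ n := by exact_mod_cast (le_max_right _ _).trans hn
  have hn0 : (0 : ℝ) ≤ n := n.cast_nonneg
  have h1 : ∑ j ∈ Ico m n, Q j ≤ ε / 4 := by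
    have := sum_range_add_sum_Ico Q hmn
    have := hQ.sum_le_tsum (range n) fun i _ => hQ0 i
    linarith
  have h2 := (div_lt_iff₀ (by positivity)).1 (hN.trans_le hNn)
  rw [Real.dist_eq, sub_zero, abs_of_nonneg (div_nonneg (hT n) (by positivity)),
    div_lt_iff₀ (by positivity)]
  nlinarith [h m n hmn]

/-- Errors of the heavy-ball iterates for consistent data along the index path `ω`. -/
structure IsHeavyBall {p : ℕ} {X : Type*} [NormedAddCommGroup X] [InnerProductSpace ℝ X]
    [CompleteSpace X] {Y : Fin p → Type*} [∀ i, NormedAddCommGroup (Y i)]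
    [∀ i, InnerProductSpace ℝ (Y i)] [∀ i, CompleteSpace (Y i)]
    (A : ∀ i, X →L[ℝ] Y i) (η : Fin p → ℝ) (e₀ : X) (e : (ℕ → Fin p) → ℕ → X) : Prop where
  zero : ∀ ω, e ω 0 = e₀
  succ : ∀ ω, ∀ n : ℕ, e ω (n + 1) = e ω n
      - (((n : ℝ) + 2)⁻¹ * η (ω n)) • (A (ω n)).adjoint (A (ω n) (e ω n))
      + ((n : ℝ) / ((n : ℝ) + 2)) • (e ω n - e ω (n - 1))

namespace IsHeavyBall

/-- The extrapolated iterate, of which the heavy-ball iterates are the running averages. -/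
def extrapolate {p : ℕ} {X : Type*} [NormedAddCommGroup X] [NormedSpace ℝ X]
    (e : (ℕ → Fin p) → ℕ → X) (ω : ℕ → Fin p) (n : ℕ) : X :=
  e ω n + (n : ℝ) • (e ω n - e ω (n - 1))

lemma eq_average {p : ℕ} {X : Type*} [NormedAddCommGroup X] [NormedSpace ℝ X]
    (e : (ℕ → Fin p) → ℕ → X) (ω : ℕ → Fin p) (n : ℕ) :
    e ω (n + 1) = (((n : ℝ) + 1) / (n + 2)) • e ω n
      + ((1 : ℝ) / (n + 2)) • extrapolate e ω (n + 1) := by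
  have h : (n : ℝ) + 2 ≠ 0 := by positivity
  simp only [extrapolate, Nat.add_sub_cancel]
  push_cast
  match_scalars <;> field_simp <;> ring

variable {p : ℕ} {hp : 0 < p} {X : Type*} [NormedAddCommGroup X] [InnerProductSpace ℝ X]
  [CompleteSpace X] {Y : Fin p → Type*} [∀ i, NormedAddCommGroup (Y i)]
  [∀ i, InnerProductSpace ℝ (Y i)] [∀ i, CompleteSpace (Y i)]
  {A : ∀ i, X →L[ℝ] Y i} {η : Fin p → ℝ} {e₀ : X} {e : (ℕ → Fin p) → ℕ → X}

lemma dependsOn (he : IsHeavyBall A η e₀ e) (n : ℕ) :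
    DependsOn (fun ω => e ω n) (Set.Iio n) := by
  induction n using Nat.strong_induction_on with
  | _ n ih =>
    intro ω ω' h
    cases n with
    | zero => simp [he.zero]
    | succ n =>
      have h1 : e ω n = e ω' n :=
        ih n n.lt_succ_self fun k hk => h k (lt_trans hk n.lt_succ_self)
      have h2 : e ω (n - 1) = e ω' (n - 1) :=
        ih (n - 1) (by omega) fun k hk => h k (by simp only [Set.mem_Iio] at hk ⊢; omega)
      have h3 : ω n = ω' n := h n n.lt_succ_self
      show e ω (n + 1) = e ω' (n + 1)
      rw [he.succ, he.succ, h1, h2, h3]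

lemma extrapolate_succ (he : IsHeavyBall A η e₀ e) (ω : ℕ → Fin p) (n : ℕ) :
    extrapolate e ω (n + 1)
      = extrapolate e ω n - η (ω n) • (A (ω n)).adjoint (A (ω n) (e ω n)) := by
  have h : (n : ℝ) + 2 ≠ 0 := by positivity
  simp only [extrapolate, Nat.add_sub_cancel, he.succ ω n]
  push_cast
  match_scalars <;> field_simp <;> ring

lemma dependsOn_norm_sq (he : IsHeavyBall A η e₀ e) (i : Fin p) (n : ℕ) :
    DependsOn (fun ω => ‖A i (e ω n)‖ ^ 2) (Set.Iio n) := fun a b h => by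
  have h' : e a n = e b n := he.dependsOn n h
  simp only [h']

lemma energy_succ_le (he : IsHeavyBall A η e₀ e) (hη : ∀ i, 0 ≤ η i) (n : ℕ) :
    avg p hp (n + 1) (fun ω => ‖extrapolate e ω (n + 1)‖ ^ 2)
      + (n + 1 : ℝ) * ((p : ℝ)⁻¹ * ∑ i, η i * avg p hp n (fun ω => ‖A i (e ω n)‖ ^ 2))
      + (p : ℝ)⁻¹ * ∑ i, η i * (1 - η i * ‖A i‖ ^ 2) * avg p hp n (fun ω => ‖A i (e ω n)‖ ^ 2)
    ≤ avg p hp n (fun ω => ‖extrapolate e ω n‖ ^ 2)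
      + (n : ℝ) * ((p : ℝ)⁻¹ *
        ∑ i, η i * avg p hp (n - 1) (fun ω => ‖A i (e ω (n - 1))‖ ^ 2)) := by
  have hp0 : (p : ℝ) ≠ 0 := by exact_mod_cast hp.ne'
  have hupd : ∀ ω i, extrapolate e (Function.update ω n i) (n + 1)
      = extrapolate e ω n - η i • (A i).adjoint (A i (e ω n)) := by
    intro ω i
    have h1 : e (Function.update ω n i) n = e ω n :=
      he.dependsOn n fun k hk => Function.update_of_ne (ne_of_lt hk) _ _
    have h2 : e (Function.update ω n i) (n - 1) = e ω (n - 1) :=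
      he.dependsOn (n - 1) fun k hk =>
        Function.update_of_ne (by simp only [Set.mem_Iio] at hk; omega) _ _
    rw [he.extrapolate_succ, Function.update_self, extrapolate, h1, h2, extrapolate]
  have hprev : ∀ i, avg p hp (n - 1) (fun ω => ‖A i (e ω (n - 1))‖ ^ 2)
      = avg p hp n (fun ω => ‖A i (e ω (n - 1))‖ ^ 2) := fun i =>
    (avg_of_dependsOn (Nat.sub_le n 1) (he.dependsOn_norm_sq i (n - 1))).symm
  have hle : avg p hp (n + 1) (fun ω => ‖extrapolate e ω (n + 1)‖ ^ 2)
      ≤ avg p hp n (fun ω => (p : ℝ)⁻¹ * ∑ i, (‖extrapolate e ω n‖ ^ 2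
        - η i * ((n + 1) * ‖A i (e ω n)‖ ^ 2 - n * ‖A i (e ω (n - 1))‖ ^ 2)
        - η i * (1 - η i * ‖A i‖ ^ 2) * ‖A i (e ω n)‖ ^ 2)) := by
    rw [avg_succ]
    refine avg_mono n fun ω => ?_
    gcongr with i
    rw [hupd]
    exact norm_sub_smul_adjoint_sq_le (A i) (hη i) n.cast_nonneg _ _
  simp only [avg_const_mul, avg_sum, avg_sub] at hle
  simp only [hprev]
  simp only [sum_sub_distrib, mul_sub, sum_const, card_univ, Fintype.card_fin, nsmul_eq_mul,
    inv_mul_cancel_left₀ hp0, mul_left_comm (η _) (_ + 1 : ℝ), mul_left_comm (η _) (n : ℝ),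
    ← mul_sum, mul_left_comm (p : ℝ)⁻¹] at hle ⊢
  linarith

lemma energy_add_sum_le (he : IsHeavyBall A η e₀ e) (hη : ∀ i, 0 ≤ η i) (n : ℕ) :
    avg p hp n (fun ω => ‖extrapolate e ω n‖ ^ 2)
      + (n : ℝ) * ((p : ℝ)⁻¹ *
        ∑ i, η i * avg p hp (n - 1) (fun ω => ‖A i (e ω (n - 1))‖ ^ 2))
      + ∑ k ∈ range n, (p : ℝ)⁻¹ *
        ∑ i, η i * (1 - η i * ‖A i‖ ^ 2) * avg p hp k (fun ω => ‖A i (e ω k)‖ ^ 2)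
    ≤ ‖e₀‖ ^ 2 := by
  induction n with
  | zero => simp [extrapolate, he.zero, avg_const]
  | succ n ih =>
    have := he.energy_succ_le (hp := hp) hη n
    rw [sum_range_succ]
    simp only [Nat.add_sub_cancel]
    push_cast
    linarith

lemma summable_avg (he : IsHeavyBall A η e₀ e)
    (hη : ∀ i, 0 < η i ∧ 0 < 1 - η i * ‖A i‖ ^ 2) (i : Fin p) :
    Summable fun n => avg p hp n (fun ω => ‖A i (e ω n)‖ ^ 2) := by
  have hp0 : (0 : ℝ) < p := by exact_mod_cast hp
  have hQ : ∀ i n, 0 ≤ avg p hp n (fun ω => ‖A i (e ω n)‖ ^ 2) := fun i n =>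
    avg_nonneg n fun ω => sq_nonneg _
  have hc : ∀ i, 0 < η i * (1 - η i * ‖A i‖ ^ 2) := fun i => mul_pos (hη i).1 (hη i).2
  have hs : Summable fun k => (p : ℝ)⁻¹ *
      ∑ i, η i * (1 - η i * ‖A i‖ ^ 2) * avg p hp k (fun ω => ‖A i (e ω k)‖ ^ 2) := by
    refine summable_of_sum_range_le (c := ‖e₀‖ ^ 2)
      (fun n => mul_nonneg (by positivity)
        (sum_nonneg fun i _ => mul_nonneg (hc i).le (hQ i n))) fun n => ?_
    have h1 := he.energy_add_sum_le (hp := hp) (fun i => (hη i).1.le) n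
    have h2 : 0 ≤ avg p hp n (fun ω => ‖extrapolate e ω n‖ ^ 2) :=
      avg_nonneg n fun ω => sq_nonneg _
    have h3 : 0 ≤ (n : ℝ) * ((p : ℝ)⁻¹ *
        ∑ i, η i * avg p hp (n - 1) (fun ω => ‖A i (e ω (n - 1))‖ ^ 2)) :=
      mul_nonneg n.cast_nonneg (mul_nonneg (by positivity)
        (sum_nonneg fun i _ => mul_nonneg (hη i).1.le (hQ i _)))
    linarith
  refine Summable.of_nonneg_of_le (hQ i) (fun n => ?_)
    ((hs.mul_left (p : ℝ)).mul_left (η i * (1 - η i * ‖A i‖ ^ 2))⁻¹)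
  rw [mul_inv_cancel_left₀ hp0.ne', le_inv_mul_iff₀ (hc i)]
  exact single_le_sum (f := fun i => η i * (1 - η i * ‖A i‖ ^ 2) *
    avg p hp n (fun ω => ‖A i (e ω n)‖ ^ 2))
    (fun i _ => mul_nonneg (hc i).le (hQ i n)) (mem_univ i)

lemma mul_avg_le (he : IsHeavyBall A η e₀ e)
    (hη : ∀ i, 0 < η i ∧ 0 < 1 - η i * ‖A i‖ ^ 2) (i : Fin p) (n : ℕ) :
    (n + 1 : ℝ) * avg p hp n (fun ω => ‖A i (e ω n)‖ ^ 2) ≤ p * ‖e₀‖ ^ 2 / η i := by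
  have hp0 : (0 : ℝ) < p := by exact_mod_cast hp
  have hQ : ∀ i n, 0 ≤ avg p hp n (fun ω => ‖A i (e ω n)‖ ^ 2) := fun i n =>
    avg_nonneg n fun ω => sq_nonneg _
  have h1 := he.energy_add_sum_le (hp := hp) (fun i => (hη i).1.le) (n + 1)
  have h2 : 0 ≤ avg p hp (n + 1) (fun ω => ‖extrapolate e ω (n + 1)‖ ^ 2) :=
    avg_nonneg _ fun ω => sq_nonneg _
  have h3 : 0 ≤ ∑ k ∈ range (n + 1), (p : ℝ)⁻¹ *
      ∑ i, η i * (1 - η i * ‖A i‖ ^ 2) * avg p hp k (fun ω => ‖A i (e ω k)‖ ^ 2) :=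
    sum_nonneg fun k _ => mul_nonneg (by positivity) (sum_nonneg fun i _ =>
      mul_nonneg (mul_pos (hη i).1 (hη i).2).le (hQ i k))
  have h4 : η i * avg p hp n (fun ω => ‖A i (e ω n)‖ ^ 2)
      ≤ ∑ i, η i * avg p hp n (fun ω => ‖A i (e ω n)‖ ^ 2) :=
    single_le_sum (f := fun i => η i * avg p hp n (fun ω => ‖A i (e ω n)‖ ^ 2))
      (fun i _ => mul_nonneg (hη i).1.le (hQ i n)) (mem_univ i)
  simp only [Nat.add_sub_cancel] at h1
  push_cast at h1
  have h5 : (n + 1 : ℝ) * ((p : ℝ)⁻¹ *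
      ∑ i, η i * avg p hp n (fun ω => ‖A i (e ω n)‖ ^ 2)) ≤ ‖e₀‖ ^ 2 := by linarith
  have h6 : (n + 1 : ℝ) * ((p : ℝ)⁻¹ * (η i * avg p hp n (fun ω => ‖A i (e ω n)‖ ^ 2)))
      ≤ ‖e₀‖ ^ 2 := le_trans (by gcongr) h5
  rw [le_div_iff₀ (hη i).1]
  have h7 := mul_le_mul_of_nonneg_left h6 hp0.le
  calc _ = (p : ℝ) * ((n + 1 : ℝ) *
        ((p : ℝ)⁻¹ * (η i * avg p hp n (fun ω => ‖A i (e ω n)‖ ^ 2)))) := by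
        field_simp
    _ ≤ _ := h7

/-- The iterates and their extrapolations stay in a translate of the sum of the adjoint ranges,
with preimages whose norms are controlled by the accumulated residuals. -/
lemma exists_eq_add_sum_adjoint (he : IsHeavyBall A η e₀ e) (hη : ∀ i, 0 ≤ η i)
    {r : X} {v : ∀ i, Y i} (h₀ : e₀ = r + ∑ i, (A i).adjoint (v i)) (ω : ℕ → Fin p) (n : ℕ) :
    (∃ w : ∀ i, Y i, e ω n = r + ∑ i, (A i).adjoint (w i) ∧
      ∀ i, ‖w i‖ ≤ ‖v i‖ + η i * ∑ j ∈ range n, ‖A i (e ω j)‖) ∧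
    ∃ w : ∀ i, Y i, extrapolate e ω n = r + ∑ i, (A i).adjoint (w i) ∧
      ∀ i, ‖w i‖ ≤ ‖v i‖ + η i * ∑ j ∈ range n, ‖A i (e ω j)‖ := by
  induction n with
  | zero =>
    exact ⟨⟨v, by rw [he.zero, h₀], by simp⟩, ⟨v, by simp [extrapolate, he.zero, h₀], by simp⟩⟩
  | succ n ih =>
    obtain ⟨⟨w, hw, hwn⟩, z, hz, hzn⟩ := ih
    let z' : ∀ i, Y i := Function.update z (ω n) (z (ω n) - η (ω n) • A (ω n) (e ω n))
    have hz' : extrapolate e ω (n + 1) = r + ∑ i, (A i).adjoint (z' i) := by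
      rw [he.extrapolate_succ, hz, ← add_sum_erase _ _ (mem_univ (ω n)),
        ← add_sum_erase univ (fun i => (A i).adjoint (z' i)) (mem_univ (ω n))]
      have : ∑ i ∈ univ.erase (ω n), (A i).adjoint (z' i)
          = ∑ i ∈ univ.erase (ω n), (A i).adjoint (z i) :=
        sum_congr rfl fun i hi => by
          rw [show z' i = z i from Function.update_of_ne (ne_of_mem_erase hi) _ _]
      rw [this]
      simp only [z', Function.update_self, map_sub, map_smul]
      abel
    have hzn' : ∀ i, ‖z' i‖ ≤ ‖v i‖ + η i * ∑ j ∈ range (n + 1), ‖A i (e ω j)‖ := by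
      intro i
      rw [sum_range_succ, mul_add, ← add_assoc]
      rcases eq_or_ne i (ω n) with rfl | hi
      · simp only [z', Function.update_self]
        refine (norm_sub_le _ _).trans (add_le_add (hzn _) ?_)
        rw [norm_smul, Real.norm_eq_abs, abs_of_nonneg (hη _)]
      · rw [show z' i = z i from Function.update_of_ne hi _ _]
        have := mul_nonneg (hη i) (norm_nonneg (A i (e ω n)))
        linarith [hzn i]
    have hsum : ((n : ℝ) + 1) / (n + 2) + (1 : ℝ) / (n + 2) = 1 := by
      field_simp
      ring
    refine ⟨⟨fun i => (((n : ℝ) + 1) / (n + 2)) • w i + ((1 : ℝ) / (n + 2)) • z' i, ?_, ?_⟩,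
      z', hz', hzn'⟩
    · have hr : (((n : ℝ) + 1) / (n + 2)) • r + ((1 : ℝ) / (n + 2)) • r = r := by
        rw [← add_smul, hsum, one_smul]
      rw [eq_average e ω n, hw, hz']
      simp only [map_add, map_smul, sum_add_distrib, ← smul_sum, smul_add]
      rw [add_add_add_comm, hr]
    · intro i
      have hwn' : ‖w i‖ ≤ ‖v i‖ + η i * ∑ j ∈ range (n + 1), ‖A i (e ω j)‖ := by
        rw [sum_range_succ, mul_add, ← add_assoc]
        have := mul_nonneg (hη i) (norm_nonneg (A i (e ω n)))
        linarith [hwn i]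
      have := (convex_closedBall (0 : Y i)
        (‖v i‖ + η i * ∑ j ∈ range (n + 1), ‖A i (e ω j)‖))
        (mem_closedBall_zero_iff.2 hwn') (mem_closedBall_zero_iff.2 (hzn' i))
        (by positivity) (by positivity) hsum
      exact mem_closedBall_zero_iff.1 this

lemma norm_sq_le (he : IsHeavyBall A η e₀ e) (hη : ∀ i, 0 ≤ η i)
    {r : X} {v : ∀ i, Y i} (h₀ : e₀ = r + ∑ i, (A i).adjoint (v i)) {t : ℝ} (ht : 0 < t)
    (ω : ℕ → Fin p) (n : ℕ) :
    ‖e ω n‖ ^ 2 ≤ ‖r‖ ^ 2 + ∑ i, (t * ‖A i (e ω n)‖ ^ 2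
      + t⁻¹ * (2 * ‖v i‖ ^ 2 + 2 * η i ^ 2 * (∑ j ∈ range n, ‖A i (e ω j)‖) ^ 2)) := by
  obtain ⟨w, hw, hwn⟩ := (he.exists_eq_add_sum_adjoint hη h₀ ω n).1
  have h1 : ‖e ω n‖ ^ 2 = inner ℝ r (e ω n) + ∑ i, inner ℝ (w i) (A i (e ω n)) := by
    rw [← real_inner_self_eq_norm_sq]
    nth_rewrite 1 [hw]
    simp only [inner_add_left, sum_inner, ContinuousLinearMap.adjoint_inner_left]
  have h2 : 2 * inner ℝ r (e ω n) ≤ ‖r‖ ^ 2 + ‖e ω n‖ ^ 2 := by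
    nlinarith [real_inner_le_norm r (e ω n), sq_nonneg (‖r‖ - ‖e ω n‖)]
  have h3 : ∑ i, 2 * inner ℝ (w i) (A i (e ω n)) ≤ ∑ i, (t * ‖A i (e ω n)‖ ^ 2
      + t⁻¹ * (2 * ‖v i‖ ^ 2 + 2 * η i ^ 2 * (∑ j ∈ range n, ‖A i (e ω j)‖) ^ 2)) := by
    refine sum_le_sum fun i _ => ?_
    have h4 : ‖w i‖ ^ 2
        ≤ 2 * ‖v i‖ ^ 2 + 2 * η i ^ 2 * (∑ j ∈ range n, ‖A i (e ω j)‖) ^ 2 := by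
      have := pow_le_pow_left₀ (norm_nonneg _) (hwn i) 2
      nlinarith [sq_nonneg (‖v i‖ - η i * ∑ j ∈ range n, ‖A i (e ω j)‖)]
    have h5 : 2 * inner ℝ (w i) (A i (e ω n)) ≤ t * ‖A i (e ω n)‖ ^ 2 + t⁻¹ * ‖w i‖ ^ 2 := by
      have h6 := real_inner_le_norm (w i) (A i (e ω n))
      have h7 : t * ‖A i (e ω n)‖ ^ 2 + t⁻¹ * ‖w i‖ ^ 2 - 2 * (‖w i‖ * ‖A i (e ω n)‖)
          = t⁻¹ * (t * ‖A i (e ω n)‖ - ‖w i‖) ^ 2 := by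
        field_simp
        ring
      have h8 : 0 ≤ t⁻¹ * (t * ‖A i (e ω n)‖ - ‖w i‖) ^ 2 := by positivity
      linarith
    have := mul_le_mul_of_nonneg_left h4 (inv_pos.2 ht).le
    linarith
  rw [← mul_sum] at h3
  linarith

lemma tendsto_avg_sum_sq_div (he : IsHeavyBall A η e₀ e)
    (hη : ∀ i, 0 < η i ∧ 0 < 1 - η i * ‖A i‖ ^ 2) (i : Fin p) :
    Tendsto (fun n : ℕ => avg p hp n (fun ω => (∑ j ∈ range n, ‖A i (e ω j)‖) ^ 2)
      / ((n : ℝ) + 1)) atTop (𝓝 0) := by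
  refine tendsto_div_of_le_sum_Ico (fun n => avg_nonneg n fun ω => sq_nonneg _)
    (fun n => avg_nonneg n fun ω => sq_nonneg _) (he.summable_avg (hp := hp) hη i)
    fun m n hmn => ?_
  have hj : ∀ j ≤ n, avg p hp n (fun ω => ‖A i (e ω j)‖ ^ 2)
      = avg p hp j (fun ω => ‖A i (e ω j)‖ ^ 2) := fun j hj =>
    avg_of_dependsOn hj (he.dependsOn_norm_sq i j)
  have h := avg_mono (hp := hp) n fun ω =>
    sum_range_sq_le_of_le (s := fun j => ‖A i (e ω j)‖) hmn
  simp only [avg_add, avg_const_mul, avg_sum] at h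
  rwa [sum_congr rfl fun j hjm => hj j ((mem_range.1 hjm).le.trans hmn),
    sum_congr rfl fun j hjm => hj j (mem_Ico.1 hjm).2.le] at h

theorem tendsto_avg_norm_sq (he : IsHeavyBall A η e₀ e)
    (hη : ∀ i, 0 < η i ∧ 0 < 1 - η i * ‖A i‖ ^ 2)
    (h₀ : ∀ w, (∀ i, A i w = 0) → inner ℝ e₀ w = 0) :
    Tendsto (fun n : ℕ => avg p hp n (fun ω => ‖e ω n‖ ^ 2)) atTop (𝓝 0) := by
  refine tendsto_order.2 ⟨fun a ha => Eventually.of_forall fun n =>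
    ha.trans_le (avg_nonneg n fun ω => sq_nonneg _), fun ε hε => ?_⟩
  obtain ⟨v, hv⟩ := exists_norm_sub_sum_adjoint_lt A h₀ (Real.sqrt_pos.2 (div_pos hε three_pos))
  set r := e₀ - ∑ i, (A i).adjoint (v i)
  have h₁ : e₀ = r + ∑ i, (A i).adjoint (v i) := (sub_add_cancel _ _).symm
  have hr2 : ‖r‖ ^ 2 < ε / 3 := (Real.lt_sqrt (norm_nonneg _)).1 hv
  set C := ∑ i, p * ‖e₀‖ ^ 2 / η i with hC
  have hC0 : 0 ≤ C := sum_nonneg fun i _ => div_nonneg (by positivity) (hη i).1.le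
  set δ := ε / 3 / (C + 1) with hδ
  have hδ0 : 0 < δ := by positivity
  have hδC : δ * C < ε / 3 := by
    rw [hδ, div_mul_eq_mul_div, div_lt_iff₀ (by positivity)]
    nlinarith
  have hlim : Tendsto (fun n : ℕ => ∑ i, δ⁻¹ * (2 * ‖v i‖ ^ 2 * (1 / ((n : ℝ) + 1))
      + 2 * η i ^ 2 * (avg p hp n (fun ω => (∑ j ∈ range n, ‖A i (e ω j)‖) ^ 2)
        / ((n : ℝ) + 1)))) atTop (𝓝 0) := by
    have h : ∀ i ∈ (univ : Finset (Fin p)),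
        Tendsto (fun n : ℕ => δ⁻¹ * (2 * ‖v i‖ ^ 2 * (1 / ((n : ℝ) + 1))
          + 2 * η i ^ 2 * (avg p hp n (fun ω => (∑ j ∈ range n, ‖A i (e ω j)‖) ^ 2)
            / ((n : ℝ) + 1)))) atTop (𝓝 0) := fun i _ => by
      simpa using (((tendsto_one_div_add_atTop_nhds_zero_nat (𝕜 := ℝ)).const_mul
        (2 * ‖v i‖ ^ 2)).add ((he.tendsto_avg_sum_sq_div (hp := hp) hη i).const_mul
        (2 * η i ^ 2))).const_mul δ⁻¹
    simpa using tendsto_finsetSum univ h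
  filter_upwards [(tendsto_order.1 hlim).2 (ε / 3) (by positivity)] with n hn
  have ht : 0 < δ * ((n : ℝ) + 1) := by positivity
  have hle := avg_mono (hp := hp) n fun ω =>
    he.norm_sq_le (fun i => (hη i).1.le) h₁ ht ω n
  simp only [avg_add, avg_const_mul, avg_sum, avg_const, sum_add_distrib] at hle
  have h1 : ∑ i, δ * ((n : ℝ) + 1) * avg p hp n (fun ω => ‖A i (e ω n)‖ ^ 2) ≤ δ * C := by
    rw [hC, mul_sum]
    refine sum_le_sum fun i _ => ?_
    rw [mul_assoc]
    exact mul_le_mul_of_nonneg_left (he.mul_avg_le hη i n) hδ0.le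
  have h2 : ∑ i, (δ * ((n : ℝ) + 1))⁻¹ * (2 * ‖v i‖ ^ 2 + 2 * η i ^ 2 *
      avg p hp n (fun ω => (∑ j ∈ range n, ‖A i (e ω j)‖) ^ 2)) < ε / 3 := by
    refine lt_of_eq_of_lt (sum_congr rfl fun i _ => ?_) hn
    field_simp
  linarith

end IsHeavyBall

/-- **Theorem SHBM.thm2 (convergence with exact data).**  Assume `0 < η i < 1/‖A i‖²`
and let `x†` be the `x₀`-minimal norm solution of `A x = y`.  Then the exact-data
heavy-ball iterates satisfy `lim_{n → ∞} E[‖x n − x†‖²] = 0`. -/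
theorem stmt_14 {p : ℕ} (hp : 0 < p) {X : Type*} [NormedAddCommGroup X]
    [InnerProductSpace ℝ X] [CompleteSpace X]
    {Y : Fin p → Type*} [∀ i, NormedAddCommGroup (Y i)] [∀ i, InnerProductSpace ℝ (Y i)]
    [∀ i, CompleteSpace (Y i)]
    (A : ∀ i, X →L[ℝ] Y i) (y : ∀ i, Y i)
    (η : Fin p → ℝ) (hη : ∀ i, 0 < η i ∧ η i < 1 / ‖A i‖ ^ 2)
    (x₀ xdag : X)
    (hdag : ∀ i, (A i) xdag = y i)
    (hmin : ∀ x' : X, (∀ i, (A i) x' = y i) → ‖xdag - x₀‖ ≤ ‖x' - x₀‖)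
    (x : (ℕ → Fin p) → ℕ → X)
    (hx0 : ∀ ω, x ω 0 = x₀)
    (hx : ∀ ω, ∀ n : ℕ, x ω (n + 1) = x ω n
      - (((n : ℝ) + 2)⁻¹ * η (ω n)) • ((A (ω n)).adjoint ((A (ω n)) (x ω n) - y (ω n)))
      + ((n : ℝ) / ((n : ℝ) + 2)) • (x ω n - x ω (n - 1))) :
    Filter.Tendsto (fun n : ℕ => avg p hp n (fun ω => ‖x ω n - xdag‖ ^ 2))
      Filter.atTop (nhds 0) := by
  have he : IsHeavyBall A η (x₀ - xdag) (fun ω n => x ω n - xdag) :=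
    { zero := fun ω => by rw [hx0]
      succ := fun ω n => by
        simp only [map_sub, hdag]
        rw [hx ω n]
        simp only [map_sub]
        module }
  refine he.tendsto_avg_norm_sq (fun i => ⟨(hη i).1, ?_⟩) fun w hw => ?_
  · have hpos : 0 < ‖A i‖ ^ 2 := by
      by_contra! h
      have := (hη i).1.trans (hη i).2
      rw [le_antisymm h (sq_nonneg _)] at this
      simp at this
    linarith [(lt_div_iff₀ hpos).1 (hη i).2]
  · rw [← neg_sub, inner_neg_left, neg_eq_zero]
    refine inner_eq_zero_of_forall_norm_le_add_smul fun t => ?_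
    have h := hmin (xdag + t • w) fun i => by simp [hdag, hw]
    rwa [add_sub_right_comm] at h
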